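/- arXiv:2203.07055 — 3 statements merged into one kernel-verified Lean document; each statement's English description precedes it below -/
import Mathlib

section
/- Willems' fundamental lemma: Let A ∈ ℝ^{n×n}, B ∈ ℝ^{n×m}, C ∈ ℝ^{p×n}, D ∈ ℝ^{p×m} with (A,B) controllable. Let (u_k, ŷ_k)_{k=0}^{N−1} be an input/output trajectory of the system x̂_{k+1} = A x̂_k + B u_k, ŷ_k = C x̂_k + D u_k (i.e., there exists a state sequence x̂ for which these equations hold for k = 0,…,N−1), and suppose the input sequence u is persistently exciting of order L+n. Then a pair of sequences (ū_k, ȳ_k)_{k=0}^{L−1} is an input/output trajectory of the same system (i.e., there exists a state sequence x̄ with x̄_{k+1} = A x̄_k + B ū_k and ȳ_k = C x̄_k + D ū_k for k = 0,…,L−1) if and only if there exists α ∈ ℝ^{N−L+1} such that H_L(u)·α equals the stacked vector ū_{[0,L−1]} and H_L(ŷ)·α equals the stacked vector ȳ_{[0,L−1]}. -/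
/-!
The heart of the matter is that the matrix with columns `(x_j, u_j, …, u_{j+L-1})`,
`0 ≤ j ≤ N - L`, has full row rank (`left_kernel_trivial`). Suppose a row `(ξ, η)` annihilates all
its columns. Rewriting the relation at time `j + t` with the state equation gives, for each
`t ≤ n`, a relation between `x_j` (with coefficient `ξ A^t`) and `u_j, …, u_{j+L+t-1}`, whose input
coefficients are those of the relation for `t - 1`, shifted by one, preceded by `ξ A^{t-1} B`.
Combining the relations with the coefficients of the characteristic polynomial of `A` eliminates
the state (Cayley–Hamilton), so persistency of excitation of order `L + n` forces the combined
input coefficients to vanish. All of these coefficients are windows of the single sequence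
`F = (ξ A^{n-1} B, …, ξ A B, ξ B, η_0, …, η_{L-1}, 0, …)`, which therefore satisfies a linear
recurrence with leading coefficient `1`; since `F` is eventually zero, it is zero. Hence `η = 0`,
and `ξ = 0` by controllability.

Full row rank lets any initial state and input be matched by a combination `α` of the columns, and
a combination of time-shifted trajectories is again a trajectory; this gives both directions.
-/

open Matrix

/-- Block Hankel matrix of depth `L` with `cols` columns built from the
ℕ-indexed sequence `z` of vectors in `ℝ^q`: the `(i,a),j` entry is `z (i+j) a`. -/
noncomputable def hankel {q : ℕ} (L cols : ℕ) (z : ℕ → Fin q → ℝ) :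
    Matrix (Fin L × Fin q) (Fin cols) ℝ :=
  fun p j => z ((p.1 : ℕ) + (j : ℕ)) p.2

/-- Controllability matrix `[B, AB, …, A^{n−1}B]`. -/
noncomputable def ctrbMat {n m : ℕ} (A : Matrix (Fin n) (Fin n) ℝ)
    (B : Matrix (Fin n) (Fin m) ℝ) : Matrix (Fin n) (Fin n × Fin m) ℝ :=
  fun i p => (A ^ (p.1 : ℕ) * B) i p.2

/-- A matrix of full row rank is surjective as a linear map. -/
lemma mulVec_surjective_of_rank {ι κ : Type*} [Fintype ι] [Fintype κ]
    (M : Matrix ι κ ℝ) (h : M.rank = Fintype.card ι) : Function.Surjective M.mulVec := by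
  have : LinearMap.range M.mulVecLin = ⊤ := by
    apply Submodule.eq_top_of_finrank_eq
    rw [Module.finrank_fintype_fun_eq_card]
    exact h
  exact LinearMap.range_eq_top.mp this

lemma eq_zero_of_vecMul_eq_zero_of_rank {ι κ : Type*} [Fintype ι] [Fintype κ]
    (M : Matrix ι κ ℝ) (h : M.rank = Fintype.card ι) (v : ι → ℝ) (hv : v ᵥ* M = 0) : v = 0 := by
  obtain ⟨w, hw⟩ := mulVec_surjective_of_rank M h v
  have h0 : v ⬝ᵥ v = 0 := by
    nth_rewrite 2 [← hw]
    rw [Matrix.dotProduct_mulVec, hv, zero_dotProduct]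
  exact dotProduct_self_eq_zero.mp h0

lemma mulVec_surjective_of_left_kernel {ι κ : Type*} [Fintype ι] [Fintype κ]
    (M : Matrix ι κ ℝ) (h : ∀ v : ι → ℝ, v ᵥ* M = 0 → v = 0) :
    Function.Surjective M.mulVec := by
  apply mulVec_surjective_of_rank
  have hinj : Function.Injective M.vecMul := by
    intro a b hab
    have : (a - b) ᵥ* M = 0 := by
      rw [Matrix.sub_vecMul]; exact sub_eq_zero.mpr hab
    exact sub_eq_zero.mp (h _ this)
  exact (Matrix.vecMul_injective_iff.mp hinj).rank_matrix

/-- An eventually zero sequence satisfying a linear recurrence in which the earliest term has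
coefficient `c n = 1` vanishes identically. -/
lemma eq_zero_of_recurrence {V : Type*} [AddCommGroup V] [Module ℝ V] (n K : ℕ) (c : ℕ → ℝ)
    (hc : c n = 1) (F : ℕ → V) (hF : ∀ i, K ≤ i → F i = 0)
    (hrec : ∀ k < K, ∑ t ∈ Finset.range (n + 1), c t • F (k + (n - t)) = 0) (i : ℕ) :
    F i = 0 := by
  have key : ∀ s k, K ≤ k + s → F k = 0 := by
    intro s
    induction s with
    | zero => exact fun k hk => hF k hk
    | succ s ih =>
      intro k hk
      by_cases hkK : K ≤ k
      · exact hF k hkK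
      · have h := hrec k (by omega)
        rw [Finset.sum_range_succ, Finset.sum_eq_zero, hc] at h
        · simpa using h
        · intro t ht
          rw [Finset.mem_range] at ht
          rw [ih _ (by omega), smul_zero]
  exact key K i (by omega)

/-- A relation between the state and the next `L` inputs, holding at times `0, …, T`, gives a
relation of depth `L + t` at times `0, …, T - t`. Its input coefficients are the window of `F`
starting at `n - t`. -/
lemma shifted_relation {n m L T : ℕ} (A : Matrix (Fin n) (Fin n) ℝ) (B : Matrix (Fin n) (Fin m) ℝ)
    (u : ℕ → Fin m → ℝ) (x : ℕ → Fin n → ℝ) (hx : ∀ k < T, x (k + 1) = A *ᵥ x k + B *ᵥ u k)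
    (ξ : Fin n → ℝ) (F : ℕ → Fin m → ℝ) (hF : ∀ t < n, F (n - (t + 1)) = ξ ᵥ* (A ^ t * B))
    (h0 : ∀ j ≤ T, ξ ⬝ᵥ x j + ∑ k ∈ Finset.range L, F (k + n) ⬝ᵥ u (k + j) = 0)
    (t : ℕ) (ht : t ≤ n) (j : ℕ) (hj : j + t ≤ T) :
    (ξ ᵥ* A ^ t) ⬝ᵥ x j + ∑ k ∈ Finset.range (L + t), F (k + (n - t)) ⬝ᵥ u (k + j) = 0 := by
  induction t generalizing j with
  | zero => simpa using h0 j (by omega)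
  | succ t ih =>
    have h := ih (by omega) (j + 1) (by omega)
    rw [hx j (by omega), dotProduct_add, Matrix.dotProduct_mulVec, Matrix.dotProduct_mulVec,
      Matrix.vecMul_vecMul, Matrix.vecMul_vecMul, ← pow_succ, ← hF t (by omega)] at h
    rw [← add_assoc L t 1, Finset.sum_range_succ']
    have e : ∀ k, F (k + 1 + (n - (t + 1))) ⬝ᵥ u (k + 1 + j)
        = F (k + (n - t)) ⬝ᵥ u (k + (j + 1)) := by
      intro k
      rw [show k + 1 + (n - (t + 1)) = k + (n - t) by omega,
        show k + 1 + j = k + (j + 1) by omega]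
    simp only [e, zero_add]
    linarith

/-- The rows of the matrix with columns `(x_j, u_j, …, u_{j+L-1})`, `0 ≤ j ≤ N - L`, are linearly
independent. The coefficients `η` of the inputs are extended by zero beyond `L`. -/
lemma left_kernel_trivial {n m N L : ℕ} (hL : 1 ≤ L) (hLnN : L + n ≤ N)
    (A : Matrix (Fin n) (Fin n) ℝ) (B : Matrix (Fin n) (Fin m) ℝ)
    (hctrb : (ctrbMat A B).rank = n)
    (u : ℕ → Fin m → ℝ) (x : ℕ → Fin n → ℝ)
    (hx : ∀ k < N, x (k + 1) = A *ᵥ x k + B *ᵥ u k)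
    (hpe : (hankel (L + n) (N - (L + n) + 1) u).rank = m * (L + n))
    (ξ : Fin n → ℝ) (η : ℕ → Fin m → ℝ) (hη : ∀ i, L ≤ i → η i = 0)
    (h0 : ∀ j ≤ N - L, ξ ⬝ᵥ x j + ∑ k ∈ Finset.range L, η k ⬝ᵥ u (k + j) = 0) :
    ξ = 0 ∧ η = 0 := by
  set F : ℕ → Fin m → ℝ :=
    fun i => if i < n then ξ ᵥ* (A ^ (n - 1 - i) * B) else η (i - n) with hFdef
  have hFlow : ∀ t < n, F (n - (t + 1)) = ξ ᵥ* (A ^ t * B) := by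
    intro t ht
    simp only [hFdef]
    rw [if_pos (by omega), show n - 1 - (n - (t + 1)) = t by omega]
  have hFhigh : ∀ k, F (k + n) = η k := by
    intro k
    simp [hFdef]
  have hFzero : ∀ i, L + n ≤ i → F i = 0 := by
    intro i hi
    rw [show i = (i - n) + n by omega, hFhigh, hη _ (by omega)]
  -- Zero padding brings the relation for every `t ≤ n` to the common depth `L + n`.
  have hrel : ∀ t ∈ Finset.range (n + 1), ∀ j ≤ N - (L + n),
      (ξ ᵥ* A ^ t) ⬝ᵥ x j
        + ∑ k ∈ Finset.range (L + n), F (k + (n - t)) ⬝ᵥ u (k + j) = 0 := by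
    intro t ht j hj
    rw [Finset.mem_range] at ht
    have h := shifted_relation (L := L) (T := N - L) A B u x (fun k hk => hx k (by omega)) ξ F hFlow
      (by simpa only [hFhigh] using h0) t (by omega) j (by omega)
    rw [← h]
    congr 1
    symm
    apply Finset.sum_subset
    · intro k hk
      rw [Finset.mem_range] at hk ⊢
      omega
    · intro k _ hk
      rw [Finset.mem_range] at hk
      rw [hFzero _ (by omega), zero_dotProduct]
  set c : ℕ → ℝ := A.charpoly.coeff with hcdef
  have hdeg : A.charpoly.natDegree = n := by
    simp
  have hcn : c n = 1 := by
    have := A.charpoly_monic.coeff_natDegree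
    rwa [hdeg] at this
  have hCH : ∑ t ∈ Finset.range (n + 1), c t • A ^ t = 0 := by
    have := A.aeval_self_charpoly
    rwa [Polynomial.aeval_eq_sum_range, hdeg] at this
  set W : ℕ → Fin m → ℝ := fun k => ∑ t ∈ Finset.range (n + 1), c t • F (k + (n - t)) with hWdef
  have hWu : ∀ j ≤ N - (L + n), ∑ k ∈ Finset.range (L + n), W k ⬝ᵥ u (k + j) = 0 := by
    intro j hj
    have hsum : ∑ t ∈ Finset.range (n + 1), c t * ((ξ ᵥ* A ^ t) ⬝ᵥ x j
        + ∑ k ∈ Finset.range (L + n), F (k + (n - t)) ⬝ᵥ u (k + j)) = 0 :=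
      Finset.sum_eq_zero fun t ht => by rw [hrel t ht j hj, mul_zero]
    have hstate : ∑ t ∈ Finset.range (n + 1), c t * ((ξ ᵥ* A ^ t) ⬝ᵥ x j) = 0 := by
      have : ξ ⬝ᵥ ((∑ t ∈ Finset.range (n + 1), c t • A ^ t) *ᵥ x j) = 0 := by
        rw [hCH, Matrix.zero_mulVec, dotProduct_zero]
      rw [← this, Matrix.sum_mulVec, dotProduct_sum]
      refine Finset.sum_congr rfl fun t _ => ?_
      rw [Matrix.smul_mulVec, dotProduct_smul, Matrix.dotProduct_mulVec, smul_eq_mul]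
    simp only [mul_add, Finset.sum_add_distrib, hstate, zero_add, Finset.mul_sum] at hsum
    rw [Finset.sum_comm] at hsum
    rw [← hsum]
    refine Finset.sum_congr rfl fun k _ => ?_
    rw [hWdef, sum_dotProduct]
    refine Finset.sum_congr rfl fun t _ => ?_
    rw [smul_dotProduct, smul_eq_mul]
  have hW : ∀ k < L + n, W k = 0 := by
    have hv := eq_zero_of_vecMul_eq_zero_of_rank (hankel (L + n) (N - (L + n) + 1) u)
      (by rw [hpe]; simp [mul_comm]) (fun q => W q.1 q.2) (by
        ext j
        rw [Pi.zero_apply, ← hWu j (by omega), Finset.sum_range]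
        simp only [Matrix.vecMul, dotProduct, hankel, Fintype.sum_prod_type])
    intro k hk
    ext a
    exact congrFun hv (⟨k, hk⟩, a)
  have hF0 : ∀ i, F i = 0 := eq_zero_of_recurrence n (L + n) c hcn F hFzero hW
  refine ⟨?_, funext fun k => by rw [← hFhigh, hF0]; rfl⟩
  apply eq_zero_of_vecMul_eq_zero_of_rank (ctrbMat A B) (by simpa using hctrb)
  ext q
  have := hFlow q.1 q.1.2
  rw [hF0] at this
  exact (congrFun this q.2).symm

/-- Any initial state and input of length `L` is a combination of the columns
`(x_j, u_j, …, u_{j+L-1})`. -/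
lemma exists_combination {n m N L : ℕ} (hL : 1 ≤ L) (hLnN : L + n ≤ N)
    (A : Matrix (Fin n) (Fin n) ℝ) (B : Matrix (Fin n) (Fin m) ℝ)
    (hctrb : (ctrbMat A B).rank = n)
    (u : ℕ → Fin m → ℝ) (x : ℕ → Fin n → ℝ)
    (hx : ∀ k < N, x (k + 1) = A *ᵥ x k + B *ᵥ u k)
    (hpe : (hankel (L + n) (N - (L + n) + 1) u).rank = m * (L + n))
    (x₀ : Fin n → ℝ) (ubar : ℕ → Fin m → ℝ) :
    ∃ α : Fin (N - L + 1) → ℝ, ∑ j, α j • x j = x₀ ∧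
      ∀ k < L, ∑ j, α j • u (k + j) = ubar k := by
  let M : Matrix (Fin n ⊕ Fin L × Fin m) (Fin (N - L + 1)) ℝ :=
    Matrix.of fun r j => Sum.elim (x j) (fun q => u (q.1 + j) q.2) r
  have hM : Function.Surjective M.mulVec := by
    apply mulVec_surjective_of_left_kernel
    intro v hv
    let η : ℕ → Fin m → ℝ := fun k a => if h : k < L then v (Sum.inr (⟨k, h⟩, a)) else 0
    have hηv : ∀ (k : Fin L) a, η k a = v (Sum.inr (k, a)) := fun k a => by simp [η]
    obtain ⟨h1, h2⟩ := left_kernel_trivial hL hLnN A B hctrb u x hx hpe (fun i => v (Sum.inl i)) η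
      (fun i hi => by ext a; simp [η, Nat.not_lt.mpr hi]) (by
        intro j hj
        have h := congrFun hv ⟨j, by omega⟩
        rw [Pi.zero_apply] at h
        rw [← h, Finset.sum_range]
        simp [Matrix.vecMul, dotProduct, M, Fintype.sum_prod_type, hηv])
    ext (i | ⟨k, a⟩)
    · exact congrFun h1 i
    · rw [← hηv, h2]; rfl
  obtain ⟨α, hα⟩ := hM (Sum.elim x₀ fun q => ubar q.1 q.2)
  refine ⟨α, ?_, ?_⟩
  · ext i
    have := congrFun hα (Sum.inl i)
    simpa [Matrix.mulVec, dotProduct, M, mul_comm] using this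
  · intro k hk
    ext a
    have := congrFun hα (Sum.inr (⟨k, hk⟩, a))
    simpa [Matrix.mulVec, dotProduct, M, mul_comm] using this

lemma hankel_mulVec_eq_iff {q L c : ℕ} (z : ℕ → Fin q → ℝ) (α : Fin c → ℝ) (zbar : ℕ → Fin q → ℝ) :
    (hankel L c z).mulVec α = (fun r => zbar (r.1 : ℕ) r.2) ↔
      ∀ k < L, ∑ j, α j • z (k + j) = zbar k := by
  constructor
  · intro h k hk
    ext a
    have := congrFun h (⟨k, hk⟩, a)
    simpa [Matrix.mulVec, dotProduct, hankel, mul_comm] using this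
  · intro h
    ext ⟨k, a⟩
    have := congrFun (h k k.2) a
    simpa [Matrix.mulVec, dotProduct, hankel, mul_comm] using this

/-- A linear relation `w = P x + Q u` passes to linear combinations. -/
lemma combination_linear {ι : Type*} [Fintype ι] {r n m : ℕ} (P : Matrix (Fin r) (Fin n) ℝ)
    (Q : Matrix (Fin r) (Fin m) ℝ) (α : ι → ℝ) (w : ι → Fin r → ℝ) (x : ι → Fin n → ℝ)
    (u : ι → Fin m → ℝ) (h : ∀ j, w j = P *ᵥ x j + Q *ᵥ u j) :
    ∑ j, α j • w j = P *ᵥ (∑ j, α j • x j) + Q *ᵥ (∑ j, α j • u j) := by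
  simp only [h, Matrix.mulVec_sum, Matrix.mulVec_smul, smul_add, Finset.sum_add_distrib]

/-- Willems' fundamental lemma. -/
theorem willems_fundamental_lemma
    {n m p N L : ℕ} (hL : 1 ≤ L) (hLnN : L + n ≤ N)
    (A : Matrix (Fin n) (Fin n) ℝ) (B : Matrix (Fin n) (Fin m) ℝ)
    (C : Matrix (Fin p) (Fin n) ℝ) (D : Matrix (Fin p) (Fin m) ℝ)
    (hctrb : (ctrbMat A B).rank = n)
    (u : ℕ → Fin m → ℝ) (y : ℕ → Fin p → ℝ)
    (htraj : ∃ x : ℕ → Fin n → ℝ, ∀ k < N,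
      x (k + 1) = A.mulVec (x k) + B.mulVec (u k) ∧
      y k = C.mulVec (x k) + D.mulVec (u k))
    (hpe : (hankel (L + n) (N - (L + n) + 1) u).rank = m * (L + n))
    (ubar : ℕ → Fin m → ℝ) (ybar : ℕ → Fin p → ℝ) :
    (∃ xbar : ℕ → Fin n → ℝ, ∀ k < L,
        xbar (k + 1) = A.mulVec (xbar k) + B.mulVec (ubar k) ∧
        ybar k = C.mulVec (xbar k) + D.mulVec (ubar k)) ↔
    (∃ α : Fin (N - L + 1) → ℝ,
        (hankel L (N - L + 1) u).mulVec α = (fun q => ubar (q.1 : ℕ) q.2) ∧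
        (hankel L (N - L + 1) y).mulVec α = (fun q => ybar (q.1 : ℕ) q.2)) := by
  obtain ⟨x, hx⟩ := htraj
  simp only [hankel_mulVec_eq_iff]
  -- For `k < L`, every column index `j ≤ N - L` has `k + j < N`.
  have hnext : ∀ (α : Fin (N - L + 1) → ℝ), ∀ k < L, ∑ j, α j • x (k + 1 + j) =
      A *ᵥ (∑ j, α j • x (k + j)) + B *ᵥ (∑ j, α j • u (k + j)) := by
    intro α k hk
    refine combination_linear A B α _ _ _ fun j => ?_
    rw [show k + 1 + (j : ℕ) = k + j + 1 by omega]
    exact (hx (k + j) (by omega)).1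
  have hout : ∀ (α : Fin (N - L + 1) → ℝ), ∀ k < L, ∑ j, α j • y (k + j) =
      C *ᵥ (∑ j, α j • x (k + j)) + D *ᵥ (∑ j, α j • u (k + j)) := fun α k hk =>
    combination_linear C D α _ _ _ fun j => (hx (k + j) (by omega)).2
  constructor
  · rintro ⟨xbar, hxbar⟩
    obtain ⟨α, hα0, hαu⟩ := exists_combination hL hLnN A B hctrb u x (fun k hk => (hx k hk).1) hpe
      (xbar 0) ubar
    have hstate : ∀ k ≤ L, ∑ j, α j • x (k + j) = xbar k := by
      intro k
      induction k with
      | zero => intro _; simpa using hα0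
      | succ k ih =>
        intro hk
        rw [hnext α k (by omega), ih (by omega), hαu k (by omega), (hxbar k (by omega)).1]
    refine ⟨α, hαu, fun k hk => ?_⟩
    rw [hout α k hk, hstate k hk.le, hαu k hk, (hxbar k hk).2]
  · rintro ⟨α, hαu, hαy⟩
    refine ⟨fun k => ∑ j, α j • x (k + j), fun k hk => ⟨?_, ?_⟩⟩
    · simpa only [hαu k hk] using hnext α k hk
    · rw [← hαy k hk, hout α k hk, hαu k hk]
end

section
/- Recursive feasibility of the tightened input constraint (state feedback): Let n ≥ 1 be an integer, K ∈ ℝ^{m×n}, and let K̄, c_pe, Γ, x_max, d̄_n, d̄_{N−1}, c_{α,k+n}, c_{σ,k+n}, c_{α,L−1}, c_{σ,L−1}, b_{u,k}, b_{α,k}, b_{σ,k}, b_{c,k}, u_max be nonnegative reals with ‖K‖_∞ ≤ K̄. Define b_{u,k+n} = b_{u,k} + b_{α,k}·c_pe + b_{σ,k}·c_pe·d̄_{N−1}, b_{α,k+n} = b_{u,k+n}·Γ·c_{α,L−1} + K̄·c_{α,k+n}, b_{σ,k+n} = b_{u,k+n}·Γ·c_{σ,L−1} + K̄·c_{σ,k+n},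 and b_{c,k+n} = b_{c,k} + b_{α,k}·c_pe·(n·x_max + n·d̄_n) + b_{σ,k}·(d̄_{N−1}·c_pe·(n·x_max + n·d̄_n) + d̄_n) + K̄·d̄_n. Let V*, A*, S*, V', A', S' be nonnegative reals, N* ≥ 0, and x̄*, x̂*, x̄' ∈ ℝ^n such that: (i) N* + b_{u,k+n}·V* + b_{α,k+n}·A* + b_{σ,k+n}·S* + b_{c,k+n} + ‖K x̄*‖_∞ ≤ u_max; (ii) V' ≤ V* + Γ·c_{α,L−1}·A* + Γ·c_{σ,L−1}·S*; (iii) A' ≤ c_pe·(V' + n·x_max + n·d̄_n); (iv) S' ≤ d̄_{N−1}·A' + d̄_n; (v) ‖x̂* − x̄*‖_∞ ≤ c_{α,k+n}·A* + c_{σ,k+n}·S*; (vi) ‖x̄' − x̂*‖_∞ ≤ d̄_n. Then N* + b_{u,k}·V' + b_{α,k}·A' + b_{σ,k}·S' + b_{c,k} + ‖K x̄'‖_∞ ≤ u_max. -/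
/-!
The coefficients at step `k+n` are exactly what is left after substituting the bounds on the
candidate solution into the constraint at step `k`. Bounding `S'` by `A'`, `A'` by `V'` and `V'`
by the optimal quantities, with nonnegative weights, accumulates the weight `bukn` on
`Vs + Γ * cαL * As + Γ * cσL * Ss`. The feedback term obeys
`‖K xbar'‖ ≤ ‖K xbars‖ + Kbar * (‖xbar' - xhats‖ + ‖xhats - xbars‖)`, because the maximum absolute
row sum bounds the operator norm for the sup norm (`norm_mulVec_le_matInfNorm`).
-/

open Matrix Finset

/-- Induced ∞-norm (maximum absolute row sum) of a real matrix, expressed via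
the sup norm on `Fin a → ℝ`. -/
noncomputable def matInfNorm {a b : ℕ} (M : Matrix (Fin a) (Fin b) ℝ) : ℝ :=
  ‖fun i : Fin a => ∑ j : Fin b, |M i j|‖

theorem norm_mulVec_le_matInfNorm {a b : ℕ} (M : Matrix (Fin a) (Fin b) ℝ) (v : Fin b → ℝ) :
    ‖M.mulVec v‖ ≤ matInfNorm M * ‖v‖ := by
  have h0 : 0 ≤ matInfNorm M := norm_nonneg _
  refine (pi_norm_le_iff_of_nonneg (by positivity)).2 fun i => ?_
  have hrow : ∑ j, |M i j| ≤ matInfNorm M :=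
    (le_abs_self _).trans (norm_le_pi_norm (fun i : Fin a => ∑ j : Fin b, |M i j|) i)
  calc ‖M.mulVec v i‖ ≤ ∑ j, ‖M i j * v j‖ :=
        norm_sum_le Finset.univ fun j => M i j * v j
    _ ≤ ∑ j, |M i j| * ‖v‖ := by
        refine Finset.sum_le_sum fun j _ => ?_
        rw [norm_mul, Real.norm_eq_abs (M i j)]
        exact mul_le_mul_of_nonneg_left (norm_le_pi_norm v j) (abs_nonneg _)
    _ = (∑ j, |M i j|) * ‖v‖ := (Finset.sum_mul _ _ _).symm
    _ ≤ matInfNorm M * ‖v‖ := mul_le_mul_of_nonneg_right hrow (norm_nonneg _)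

/-- Recursive feasibility of the tightened input constraint (state feedback):
the candidate solution satisfies the tightened input constraint at step `k`
given that the previously optimal solution satisfied it at step `k+n`. -/
theorem recursive_feasibility_input_constraint
    {n m : ℕ} (hn : 1 ≤ n)
    (K : Matrix (Fin m) (Fin n) ℝ)
    (Kbar cpe Γ xmax dbarn dbarN cαkn cσkn cαL cσL buk bαk bσk bck umax : ℝ)
    (hKbar : 0 ≤ Kbar) (hcpe : 0 ≤ cpe) (hΓ : 0 ≤ Γ) (hxmax : 0 ≤ xmax)
    (hdbarn : 0 ≤ dbarn) (hdbarN : 0 ≤ dbarN)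
    (hcαkn : 0 ≤ cαkn) (hcσkn : 0 ≤ cσkn) (hcαL : 0 ≤ cαL) (hcσL : 0 ≤ cσL)
    (hbuk : 0 ≤ buk) (hbαk : 0 ≤ bαk) (hbσk : 0 ≤ bσk) (hbck : 0 ≤ bck)
    (humax : 0 ≤ umax)
    (hK : matInfNorm K ≤ Kbar)
    -- the coefficients at step k+n
    (bukn bαkn bσkn bckn : ℝ)
    (hbukn : bukn = buk + bαk * cpe + bσk * cpe * dbarN)
    (hbαkn : bαkn = bukn * Γ * cαL + Kbar * cαkn)
    (hbσkn : bσkn = bukn * Γ * cσL + Kbar * cσkn)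
    (hbckn : bckn = bck + bαk * cpe * ((n : ℝ) * xmax + (n : ℝ) * dbarn) +
      bσk * (dbarN * cpe * ((n : ℝ) * xmax + (n : ℝ) * dbarn) + dbarn) +
      Kbar * dbarn)
    -- quantities associated with the optimal and the candidate solution
    (Vs As Ss V' A' S' Ns : ℝ)
    (hVs : 0 ≤ Vs) (hAs : 0 ≤ As) (hSs : 0 ≤ Ss)
    (hV' : 0 ≤ V') (hA' : 0 ≤ A') (hS' : 0 ≤ S') (hNs : 0 ≤ Ns)
    (xbars xhats xbar' : Fin n → ℝ)
    (h1 : Ns + bukn * Vs + bαkn * As + bσkn * Ss + bckn + ‖K.mulVec xbars‖ ≤ umax)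
    (h2 : V' ≤ Vs + Γ * cαL * As + Γ * cσL * Ss)
    (h3 : A' ≤ cpe * (V' + (n : ℝ) * xmax + (n : ℝ) * dbarn))
    (h4 : S' ≤ dbarN * A' + dbarn)
    (h5 : ‖xhats - xbars‖ ≤ cαkn * As + cσkn * Ss)
    (h6 : ‖xbar' - xhats‖ ≤ dbarn) :
    Ns + buk * V' + bαk * A' + bσk * S' + bck + ‖K.mulVec xbar'‖ ≤ umax := by
  have hx : ‖xbar' - xbars‖ ≤ dbarn + (cαkn * As + cσkn * Ss) :=
    (norm_sub_le_norm_sub_add_norm_sub xbar' xhats xbars).trans (add_le_add h6 h5)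
  have hKx : ‖K.mulVec xbar'‖ ≤
      Kbar * (dbarn + (cαkn * As + cσkn * Ss)) + ‖K.mulVec xbars‖ := by
    have hsplit : K.mulVec xbar' = K.mulVec (xbar' - xbars) + K.mulVec xbars := by
      rw [← Matrix.mulVec_add, sub_add_cancel]
    rw [hsplit]
    refine (norm_add_le _ _).trans (add_le_add_left ?_ _)
    exact (norm_mulVec_le_matInfNorm K _).trans
      (mul_le_mul hK hx (norm_nonneg _) hKbar)
  have hS := mul_le_mul_of_nonneg_left h4 hbσk
  -- `A'` carries its own weight `bαk` plus the weight `bσk * dbarN` inherited from `S'`.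
  have hA := mul_le_mul_of_nonneg_left h3 (add_nonneg hbαk (mul_nonneg hbσk hdbarN))
  have hbukn0 : 0 ≤ bukn := by rw [hbukn]; positivity
  have hV := mul_le_mul_of_nonneg_left h2 hbukn0
  subst hbαkn hbσkn hbckn
  have hVeq : bukn * V' = (buk + bαk * cpe + bσk * cpe * dbarN) * V' := by rw [hbukn]
  linarith
end

section
/- Recursive feasibility of the tightened state constraint (state feedback): Let n ≥ 1 be an integer and let c_pe, Γ, x_max, d̄_n, d̄_{N−1}, c_{α,k+n}, c_{σ,k+n}, c_{α,L−1}, c_{σ,L−1}, a_{u,k}, a_{α,k}, a_{σ,k}, a_{c,k} be nonnegative reals. Define a_{u,k+n} = a_{u,k} + a_{α,k}·c_pe + a_{σ,k}·c_pe·d̄_{N−1}, a_{α,k+n} = a_{u,k+n}·Γ·c_{α,L−1} + c_{α,k+n}, a_{σ,k+n} = a_{u,k+n}·Γ·c_{σ,L−1} + c_{σ,k+n}, and a_{c,k+n} = a_{c,k} + a_{α,k}·c_pe·(n·x_max + n·d̄_n) + a_{σ,k}·(d̄_{N−1}·c_pe·(n·x_max + n·d̄_n) + d̄_n) + d̄_n.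 Let V*, A*, S*, V', A', S' be nonnegative reals and x̄*, x̂*, x̄' ∈ ℝ^n such that: (i) ‖x̄*‖_∞ + a_{u,k+n}·V* + a_{α,k+n}·A* + a_{σ,k+n}·S* + a_{c,k+n} ≤ x_max; (ii) V' ≤ V* + Γ·c_{α,L−1}·A* + Γ·c_{σ,L−1}·S*; (iii) A' ≤ c_pe·(V' + n·x_max + n·d̄_n); (iv) S' ≤ d̄_{N−1}·A' + d̄_n; (v) ‖x̂* − x̄*‖_∞ ≤ c_{α,k+n}·A* + c_{σ,k+n}·S*; (vi) ‖x̄' − x̂*‖_∞ ≤ d̄_n. Then ‖x̄'‖_∞ + a_{u,k}·V' + a_{α,k}·A' + a_{σ,k}·S' + a_{c,k} ≤ x_max. -/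
/-!
The constraint at step `k` is bounded by successive elimination: `h4` bounds `S'` by `A'`, `h3`
bounds `A'` by `V'`, `h2` bounds `V'` by the optimal quantities, and the triangle inequality
through `xhats` bounds `‖xbar'‖` by `‖xbars‖`. The recursion for the coefficients at step `k+n` is
precisely what makes the resulting upper bound equal to the left-hand side of `h1`.
-/

open Finset

/-- Recursive feasibility of the tightened state constraint (state feedback):
the candidate solution satisfies the tightened state constraint at step `k`
given that the previously optimal solution satisfied it at step `k+n`. -/
theorem recursive_feasibility_state_constraint
    {n : ℕ} (hn : 1 ≤ n)
    (cpe Γ xmax dbarn dbarN cαkn cσkn cαL cσL auk aαk aσk ack : ℝ)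
    (hcpe : 0 ≤ cpe) (hΓ : 0 ≤ Γ) (hxmax : 0 ≤ xmax)
    (hdbarn : 0 ≤ dbarn) (hdbarN : 0 ≤ dbarN)
    (hcαkn : 0 ≤ cαkn) (hcσkn : 0 ≤ cσkn) (hcαL : 0 ≤ cαL) (hcσL : 0 ≤ cσL)
    (hauk : 0 ≤ auk) (haαk : 0 ≤ aαk) (haσk : 0 ≤ aσk) (hack : 0 ≤ ack)
    -- the coefficients at step k+n
    (aukn aαkn aσkn ackn : ℝ)
    (haukn : aukn = auk + aαk * cpe + aσk * cpe * dbarN)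
    (haαkn : aαkn = aukn * Γ * cαL + cαkn)
    (haσkn : aσkn = aukn * Γ * cσL + cσkn)
    (hackn : ackn = ack + aαk * cpe * ((n : ℝ) * xmax + (n : ℝ) * dbarn) +
      aσk * (dbarN * cpe * ((n : ℝ) * xmax + (n : ℝ) * dbarn) + dbarn) + dbarn)
    -- quantities associated with the optimal and the candidate solution
    (Vs As Ss V' A' S' : ℝ)
    (hVs : 0 ≤ Vs) (hAs : 0 ≤ As) (hSs : 0 ≤ Ss)
    (hV' : 0 ≤ V') (hA' : 0 ≤ A') (hS' : 0 ≤ S')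
    (xbars xhats xbar' : Fin n → ℝ)
    (h1 : ‖xbars‖ + aukn * Vs + aαkn * As + aσkn * Ss + ackn ≤ xmax)
    (h2 : V' ≤ Vs + Γ * cαL * As + Γ * cσL * Ss)
    (h3 : A' ≤ cpe * (V' + (n : ℝ) * xmax + (n : ℝ) * dbarn))
    (h4 : S' ≤ dbarN * A' + dbarn)
    (h5 : ‖xhats - xbars‖ ≤ cαkn * As + cσkn * Ss)
    (h6 : ‖xbar' - xhats‖ ≤ dbarn) :
    ‖xbar'‖ + auk * V' + aαk * A' + aσk * S' + ack ≤ xmax := by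
  have hx : ‖xbar'‖ ≤ ‖xbar' - xhats‖ + ‖xhats - xbars‖ + ‖xbars‖ := by
    have e1 := norm_sub_norm_le xbar' xhats
    have e2 := norm_sub_norm_le xhats xbars
    linarith
  have hu : 0 ≤ aukn := by rw [haukn]; positivity
  -- Eliminate `S'`, `A'`, `V'` in turn. The weight of `A'` after eliminating `S'` is
  -- `aαk + aσk * dbarN`, and the weight of `V'` after eliminating `A'` is exactly `aukn`.
  have k4 := mul_le_mul_of_nonneg_left h4 haσk
  have k3 := mul_le_mul_of_nonneg_left h3 (by positivity : 0 ≤ aαk + aσk * dbarN)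
  have k2 := mul_le_mul_of_nonneg_left h2 hu
  subst haαkn haσkn hackn haukn
  linarith
end
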